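/- Let H be a real separable Hilbert space, ν = N(0,C) with C self-adjoint, positive, trace-class, μ a probability measure on H, and A : H → H a linear operator with A(H) ⊆ C^{1/2}(H). Then ν * (μ ∘ A^{-1}) is equivalent to ν. -/

import Mathlib

open MeasureTheory ProbabilityTheory
open scoped ENNReal InnerProductSpace MeasureTheory

/-- `ν` is a centered Gaussian measure on the Hilbert space `H` with covariance operator `C`:
every one-dimensional projection is a centered real Gaussian with the corresponding variance. -/
def IsCenteredGaussian {H : Type*} [NormedAddCommGroup H] [InnerProductSpace ℝ H]
    [MeasurableSpace H] (ν : Measure H) (C : H →L[ℝ] H) : Prop :=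
  IsProbabilityMeasure ν ∧
    ∀ v : H, ν.map (fun x => ⟪v, x⟫_ℝ) = gaussianReal 0 (⟪C v, v⟫_ℝ).toNNReal

/-- A bounded operator on a Hilbert space is trace-class if the sum of its diagonal elements
converges in any Hilbert basis. -/
def IsTraceClass {H : Type*} [NormedAddCommGroup H] [InnerProductSpace ℝ H]
    (C : H →L[ℝ] H) : Prop :=
  ∀ b : HilbertBasis ℕ ℝ H, Summable fun i => ⟪C (b i), b i⟫_ℝ

/-! Conditioning on `h ∼ ρ` exhibits `ν ∗ ρ` as the `ρ`-average of the translates of `ν` by `h`, so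
it suffices that the translate of a Gaussian measure `ν` by a Cameron-Martin vector `h` is
equivalent to `ν`. The Riesz representation theorem in the closure of the centered continuous linear
forms in `L²(ν)` provides the Paley-Wiener variable `g` of `h`, characterised by
`⟪g, L - ν[L]⟫ = L h`. Centered Gaussian laws are closed under `L²`-limits, so `g + (L - ν[L])` is
Gaussian for every `L`. Hence `ν` tilted by `g` and the translate of `ν` by `h` have the same Laplace
transform, so they agree. -/

open Filter InnerProductSpace

section Convolution

variable {M : Type*} [AddMonoid M] [MeasurableSpace M] [MeasurableAdd₂ M] {μ ρ τ : Measure M}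

lemma conv_apply_eq_zero_iff [SFinite μ] {s : Set M} (hs : MeasurableSet s) :
    (ρ ∗ μ) s = 0 ↔ ∀ᵐ y ∂ρ, μ.map (y + ·) s = 0 := by
  have h_add : Measurable fun p : M × M ↦ p.1 + p.2 := by fun_prop
  rw [Measure.conv, Measure.map_apply h_add hs, Measure.measure_prod_null (h_add hs)]
  refine eventually_congr (ae_of_all _ fun y ↦ ?_)
  rw [Measure.map_apply (by fun_prop) hs]
  rfl

lemma conv_absolutelyContinuous_of_ae [SFinite μ] (h : ∀ᵐ y ∂ρ, μ.map (y + ·) ≪ τ) :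
    ρ ∗ μ ≪ τ :=
  Measure.AbsolutelyContinuous.mk fun _ hs hτs ↦
    (conv_apply_eq_zero_iff hs).2 <| h.mono fun _ hy ↦ hy hτs

lemma absolutelyContinuous_conv_of_frequently_ae [SFinite μ]
    (h : ∃ᶠ y in ae ρ, τ ≪ μ.map (y + ·)) : τ ≪ ρ ∗ μ :=
  Measure.AbsolutelyContinuous.mk fun _ hs hconv ↦
    let ⟨_, hy, hys⟩ := (h.and_eventually ((conv_apply_eq_zero_iff hs).1 hconv)).exists
    hy hys

end Convolution

section GaussianLp

variable {Ω : Type*} [MeasurableSpace Ω] {P : Measure Ω} [IsProbabilityMeasure P]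

lemma continuous_charFun_map_Lp (p : ℝ≥0∞) [Fact (1 ≤ p)] (t : ℝ) :
    Continuous fun f : Lp ℝ p P ↦ charFun (P.map f) t := by
  refine continuous_iff_seqContinuous.2 fun u f hu ↦ ?_
  have h_distrib : TendstoInDistribution (fun n ↦ ⇑(u n)) atTop f (fun _ ↦ P) P :=
    (tendstoInMeasure_of_tendsto_Lp hu).tendstoInDistribution
      fun n ↦ (Lp.aestronglyMeasurable (u n)).aemeasurable
  exact ProbabilityMeasure.tendsto_iff_tendsto_charFun.1 h_distrib.tendsto t

lemma isClosed_setOf_map_eq_gaussianReal :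
    IsClosed {f : Lp ℝ 2 P | P.map f = gaussianReal 0 (‖f‖₊ ^ 2)} := by
  have h_eq : {f : Lp ℝ 2 P | P.map f = gaussianReal 0 (‖f‖₊ ^ 2)} =
      ⋂ t : ℝ, {f : Lp ℝ 2 P |
        charFun (P.map f) t = Complex.exp (-(‖f‖ ^ 2 * t ^ 2 / 2 : ℝ))} := by
    ext f
    simp only [Set.mem_ofPred_eq, Set.mem_iInter]
    have h_charFun (t : ℝ) : charFun (gaussianReal 0 (‖f‖₊ ^ 2)) t =
        Complex.exp (-(‖f‖ ^ 2 * t ^ 2 / 2 : ℝ)) := by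
      simp [charFun_gaussianReal]
    have := Measure.isProbabilityMeasure_map (Lp.aestronglyMeasurable f).aemeasurable
    simp_rw [← h_charFun]
    exact ⟨fun h t ↦ by rw [h], fun h ↦ Measure.ext_of_charFun (funext h)⟩
  rw [h_eq]
  exact isClosed_iInter fun t ↦ isClosed_eq (continuous_charFun_map_Lp 2 t) (by fun_prop)

end GaussianLp

lemma exists_mem_topologicalClosure_range_inner_eq {V F : Type*} [AddCommGroup V] [Module ℝ V]
    [NormedAddCommGroup F] [InnerProductSpace ℝ F] [CompleteSpace F] (J : V →ₗ[ℝ] F)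
    (φ : V →ₗ[ℝ] ℝ) (hφ : ∃ M, ∀ v, |φ v| ≤ M * ‖J v‖) :
    ∃ g ∈ J.range.topologicalClosure, ∀ v, ⟪g, J v⟫_ℝ = φ v := by
  let K := J.range.topologicalClosure
  have : CompleteSpace K := J.range.isClosed_topologicalClosure.completeSpace_coe
  let e : V →ₗ[ℝ] K :=
    J.codRestrict K fun v ↦ J.range.le_topologicalClosure (LinearMap.mem_range_self J v)
  have he : DenseRange e := by
    intro x
    rw [closure_subtype, ← Set.range_comp]
    exact x.2
  refine ⟨(toDual ℝ K).symm (φ.extendOfNorm e), Subtype.property _, fun v ↦ ?_⟩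
  calc ⟪((toDual ℝ K).symm (φ.extendOfNorm e) : F), J v⟫_ℝ
      = ⟪(toDual ℝ K).symm (φ.extendOfNorm e), e v⟫_ℝ := rfl
    _ = φ.extendOfNorm e (e v) := toDual_symm_apply
    _ = φ v := LinearMap.extendOfNorm_eq he hφ v

lemma measure_eq_of_forall_integral_exp_strongDual_eq {E : Type*} [NormedAddCommGroup E]
    [NormedSpace ℝ E] [CompleteSpace E] [SecondCountableTopology E] [MeasurableSpace E]
    [BorelSpace E] {μ ν : Measure E} [IsProbabilityMeasure μ] [IsFiniteMeasure ν]
    (h_int : ∀ L : StrongDual ℝ E, Integrable (fun x ↦ Real.exp (L x)) μ)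
    (h : ∀ L : StrongDual ℝ E, ∫ x, Real.exp (L x) ∂μ = ∫ x, Real.exp (L x) ∂ν) : μ = ν := by
  refine Measure.ext_of_charFunDual (funext fun L ↦ ?_)
  have h_mgf : mgf L μ = mgf L ν := funext fun t ↦ h (t • L)
  have h_univ : integrableExpSet L μ = Set.univ := Set.eq_univ_of_forall fun t ↦ h_int (t • L)
  have h_I := eqOn_complexMGF_of_mgf h_mgf (x := Complex.I) (by simp [h_univ])
  simpa only [complexMGF, mul_comm Complex.I, ← charFunDual_apply] using h_I

section CameronMartin

variable {E : Type*} [NormedAddCommGroup E] [NormedSpace ℝ E] [MeasurableSpace E]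

/-- `h` is a Cameron-Martin vector of `ν`: evaluation at `h` is bounded on continuous linear forms
for the `L²(ν)`-seminorm of their centered versions. For `ν = N(0, C)` on a Hilbert space these are
the elements of the range of `C^{1/2}`. Meant for `ν` with finite second moments: the variance of a
form outside `L²(ν)` is the junk value `0`. -/
def IsCameronMartinVector (ν : Measure E) (h : E) : Prop :=
  ∃ M : ℝ, ∀ L : StrongDual ℝ E, |L h| ≤ M * √Var[L; ν]

lemma measurableSet_setOf_isCameronMartinVector [OpensMeasurableSpace E] (ν : Measure E) :
    MeasurableSet {h | IsCameronMartinVector ν h} := by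
  have h_eq : {h | IsCameronMartinVector ν h} =
      ⋃ n : ℕ, ⋂ L : StrongDual ℝ E, {h | |L h| ≤ n * √Var[L; ν]} := by
    ext h
    simp only [Set.mem_ofPred_eq, Set.mem_iUnion, Set.mem_iInter]
    refine ⟨fun ⟨M, hM⟩ ↦ ?_, fun ⟨n, hn⟩ ↦ ⟨n, hn⟩⟩
    obtain ⟨n, hn⟩ := exists_nat_ge M
    exact ⟨n, fun L ↦ (hM L).trans (by gcongr)⟩
  rw [h_eq]
  exact .iUnion fun n ↦
    (isClosed_iInter fun L ↦ isClosed_le (by fun_prop) continuous_const).measurableSet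

variable [BorelSpace E]

/-- The map `L ↦ L - ν[L]` from continuous linear forms to `L²(ν)`. The closure of its range
consists of the Paley-Wiener random variables of `ν`. -/
noncomputable def centeredToLp (ν : Measure E) [IsFiniteMeasure ν] :
    StrongDual ℝ E →L[ℝ] Lp ℝ 2 ν :=
  StrongDual.toLp ν 2 - Lp.constL 2 ν ℝ ∘L ContinuousLinearMap.apply ℝ ℝ (∫ x, x ∂ν)

section Moments

variable [CompleteSpace E] {ν : Measure E} [IsFiniteMeasure ν]

lemma coeFn_centeredToLp (hν : MemLp id 2 ν) (L : StrongDual ℝ E) :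
    centeredToLp ν L =ᵐ[ν] fun x ↦ L x - ν[L] := by
  have h_memLp : MemLp L 2 ν := hν.continuousLinearMap_comp L
  have h_mean : L (∫ x, x ∂ν) = ν[L] := (L.integral_comp_comm (hν.integrable (by simp))).symm
  have h_eq : centeredToLp ν L = h_memLp.toLp L - Lp.const 2 ν ν[L] := by
    rw [← h_mean, ← StrongDual.toLp_apply hν]
    rfl
  rw [h_eq]
  filter_upwards [Lp.coeFn_sub (h_memLp.toLp L) (Lp.const 2 ν ν[L]), h_memLp.coeFn_toLp,
    Lp.coeFn_const 2 ν ν[L]] with x h_sub h_toLp h_const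
  rw [h_sub, Pi.sub_apply, h_toLp, h_const, Function.const_apply]

lemma norm_sq_centeredToLp (hν : MemLp id 2 ν) (L : StrongDual ℝ E) :
    ‖centeredToLp ν L‖ ^ 2 = Var[L; ν] := by
  rw [← real_inner_self_eq_norm_sq, L2.inner_def, variance_eq_integral (by fun_prop)]
  refine integral_congr_ae ((coeFn_centeredToLp hν L).mono fun x hx ↦ ?_)
  simp only [hx, real_inner_self_eq_norm_sq, Real.norm_eq_abs, sq_abs]

end Moments

variable [CompleteSpace E] [SecondCountableTopology E] {ν : Measure E} [IsGaussian ν]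

lemma map_centeredToLp (L : StrongDual ℝ E) :
    ν.map (centeredToLp ν L) = gaussianReal 0 (‖centeredToLp ν L‖₊ ^ 2) := by
  have h_var : (Var[L; ν]).toNNReal = ‖centeredToLp ν L‖₊ ^ 2 := by
    rw [← norm_sq_centeredToLp IsGaussian.memLp_two_id, Real.toNNReal_pow (norm_nonneg _),
      norm_toNNReal]
  rw [Measure.map_congr (coeFn_centeredToLp IsGaussian.memLp_two_id L), ← h_var]
  have h_map := gaussianReal_map_sub_const (μ := ν[L]) (v := (Var[L; ν]).toNNReal) (ν[L])
  rw [← IsGaussian.map_eq_gaussianReal, Measure.map_map (by fun_prop) (by fun_prop), sub_self]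
    at h_map
  exact h_map

variable {g : Lp ℝ 2 ν}

lemma map_eq_gaussianReal_of_mem_closure (hg : g ∈ (centeredToLp ν).range.topologicalClosure) :
    ν.map g = gaussianReal 0 (‖g‖₊ ^ 2) :=
  closure_minimal (Set.range_subset_iff.2 map_centeredToLp) isClosed_setOf_map_eq_gaussianReal hg

lemma integrable_exp_of_mem_closure (hg : g ∈ (centeredToLp ν).range.topologicalClosure) :
    Integrable (fun x ↦ Real.exp (g x)) ν := by
  have h := integrable_exp_mul_gaussianReal (μ := 0) (v := ‖g‖₊ ^ 2) 1
  rw [← map_eq_gaussianReal_of_mem_closure hg,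
    integrable_map_measure (by fun_prop) (Lp.aestronglyMeasurable g).aemeasurable] at h
  simpa [Function.comp_def] using h

lemma integral_exp_of_mem_closure (hg : g ∈ (centeredToLp ν).range.topologicalClosure) :
    ∫ x, Real.exp (g x) ∂ν = Real.exp (‖g‖ ^ 2 / 2) := by
  simpa [mgf] using mgf_gaussianReal (map_eq_gaussianReal_of_mem_closure hg) 1

lemma integral_exp_add_strongDual_of_mem_closure
    (hg : g ∈ (centeredToLp ν).range.topologicalClosure) (L : StrongDual ℝ E) :
    ∫ x, Real.exp (g x + L x) ∂ν = Real.exp (ν[L] + ‖g + centeredToLp ν L‖ ^ 2 / 2) := by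
  have h_mem : g + centeredToLp ν L ∈ (centeredToLp ν).range.topologicalClosure :=
    add_mem hg (Submodule.le_topologicalClosure _ ⟨L, rfl⟩)
  rw [Real.exp_add, ← integral_exp_of_mem_closure h_mem, ← integral_const_mul]
  refine integral_congr_ae ?_
  filter_upwards [Lp.coeFn_add g (centeredToLp ν L),
    coeFn_centeredToLp IsGaussian.memLp_two_id L] with x h_add hL
  rw [h_add, Pi.add_apply, hL, ← Real.exp_add]
  ring_nf

lemma integral_exp_strongDual (L : StrongDual ℝ E) :
    ∫ x, Real.exp (L x) ∂ν = Real.exp (ν[L] + ‖centeredToLp ν L‖ ^ 2 / 2) := by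
  rw [← zero_add (centeredToLp ν L), ← integral_exp_add_strongDual_of_mem_closure (zero_mem _)]
  refine integral_congr_ae ((Lp.coeFn_zero ℝ 2 ν).mono fun x hx ↦ ?_)
  simp only [hx, Pi.zero_apply, zero_add]

lemma integrable_exp_strongDual (L : StrongDual ℝ E) : Integrable (fun x ↦ Real.exp (L x)) ν :=
  .of_integral_ne_zero ((integral_exp_strongDual L).trans_ne (Real.exp_ne_zero _))

lemma map_const_add_eq_tilted (hg : g ∈ (centeredToLp ν).range.topologicalClosure) {h : E}
    (hgh : ∀ L, ⟪g, centeredToLp ν L⟫_ℝ = L h) : ν.map (h + ·) = ν.tilted g := by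
  have := isProbabilityMeasure_tilted (integrable_exp_of_mem_closure hg)
  have := Measure.isProbabilityMeasure_map (μ := ν) (f := (h + ·)) (by fun_prop)
  refine measure_eq_of_forall_integral_exp_strongDual_eq
    (fun L ↦ integrable_exp_strongDual L) fun L ↦ ?_
  calc ∫ x, Real.exp (L x) ∂(ν.map (h + ·))
      = ∫ x, Real.exp (L h) * Real.exp (L x) ∂ν := by
        rw [integral_map (by fun_prop) (by fun_prop)]
        simp_rw [map_add, Real.exp_add]
    _ = Real.exp (L h) * Real.exp (ν[L] + ‖centeredToLp ν L‖ ^ 2 / 2) := by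
        rw [integral_const_mul, integral_exp_strongDual]
    _ = Real.exp (ν[L] + ‖g + centeredToLp ν L‖ ^ 2 / 2) / Real.exp (‖g‖ ^ 2 / 2) := by
        rw [← Real.exp_add, ← Real.exp_sub, norm_add_sq_real, hgh]
        ring_nf
    _ = ∫ x, Real.exp (L x) ∂(ν.tilted g) := by
        rw [integral_exp_tilted, integral_exp_of_mem_closure hg,
          ← integral_exp_add_strongDual_of_mem_closure hg]
        rfl

lemma IsCameronMartinVector.exists_map_const_add_eq_tilted {h : E}
    (hh : IsCameronMartinVector ν h) :
    ∃ g ∈ (centeredToLp ν).range.topologicalClosure, ν.map (h + ·) = ν.tilted g := by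
  obtain ⟨M, hM⟩ := hh
  obtain ⟨g, hg, hgh⟩ := exists_mem_topologicalClosure_range_inner_eq
    (centeredToLp ν).toLinearMap (ContinuousLinearMap.apply ℝ ℝ h).toLinearMap ⟨M, fun L ↦ by
      simpa [← norm_sq_centeredToLp IsGaussian.memLp_two_id] using hM L⟩
  exact ⟨g, hg, map_const_add_eq_tilted hg hgh⟩

lemma IsCameronMartinVector.map_const_add_absolutelyContinuous {h : E}
    (hh : IsCameronMartinVector ν h) : ν.map (h + ·) ≪ ν := by
  obtain ⟨g, -, hgh⟩ := hh.exists_map_const_add_eq_tilted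
  exact hgh ▸ tilted_absolutelyContinuous ν g

lemma IsCameronMartinVector.absolutelyContinuous_map_const_add {h : E}
    (hh : IsCameronMartinVector ν h) : ν ≪ ν.map (h + ·) := by
  obtain ⟨g, hg, hgh⟩ := hh.exists_map_const_add_eq_tilted
  exact hgh ▸ absolutelyContinuous_tilted (integrable_exp_of_mem_closure hg)

lemma conv_absolutelyContinuous_of_ae_isCameronMartinVector {ρ : Measure E} [SFinite ρ]
    (hρ : ∀ᵐ h ∂ρ, IsCameronMartinVector ν h) : ν ∗ ρ ≪ ν := by
  rw [Measure.conv_comm]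
  exact conv_absolutelyContinuous_of_ae (hρ.mono fun _ ↦ (·.map_const_add_absolutelyContinuous))

lemma absolutelyContinuous_conv_of_frequently_ae_isCameronMartinVector {ρ : Measure E} [SFinite ρ]
    (hρ : ∃ᶠ h in ae ρ, IsCameronMartinVector ν h) : ν ≪ ν ∗ ρ := by
  rw [Measure.conv_comm]
  exact absolutelyContinuous_conv_of_frequently_ae
    (hρ.mono fun _ ↦ (·.absolutelyContinuous_map_const_add))

end CameronMartin

namespace IsCenteredGaussian

variable {H : Type*} [NormedAddCommGroup H] [InnerProductSpace ℝ H] [CompleteSpace H]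
  [MeasurableSpace H] {ν : Measure H} {C : H →L[ℝ] H}

lemma map_strongDual (hν : IsCenteredGaussian ν C) (L : StrongDual ℝ H) :
    ν.map L = gaussianReal 0
      (⟪C ((toDual ℝ H).symm L), (toDual ℝ H).symm L⟫_ℝ).toNNReal := by
  rw [← hν.2]
  simp only [toDual_symm_apply]

variable [BorelSpace H]

lemma isGaussian (hν : IsCenteredGaussian ν C) : IsGaussian ν :=
  isGaussian_of_map_eq_gaussianReal fun L ↦ ⟨_, _, hν.map_strongDual L⟩

lemma variance_strongDual (hν : IsCenteredGaussian ν C) (L : StrongDual ℝ H) :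
    Var[L; ν] = (⟪C ((toDual ℝ H).symm L), (toDual ℝ H).symm L⟫_ℝ).toNNReal := by
  rw [← variance_id_gaussianReal (μ := 0), ← hν.map_strongDual,
    variance_map (by fun_prop) (by fun_prop)]
  rfl

lemma isCameronMartinVector_apply {F : Type*} [NormedAddCommGroup F] [InnerProductSpace ℝ F]
    [CompleteSpace F] {S : F →L[ℝ] H} (hν : IsCenteredGaussian ν (S ∘L S.adjoint)) (k : F) :
    IsCameronMartinVector ν (S k) := by
  refine ⟨‖k‖, fun L ↦ ?_⟩
  let v := (toDual ℝ H).symm L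
  have h_std : √Var[L; ν] = ‖S.adjoint v‖ := by
    rw [hν.variance_strongDual, ContinuousLinearMap.comp_apply,
      ← ContinuousLinearMap.adjoint_inner_right, real_inner_self_eq_norm_sq]
    simp [v]
  calc |L (S k)| = |⟪S.adjoint v, k⟫_ℝ| := by
        rw [ContinuousLinearMap.adjoint_inner_left, toDual_symm_apply]
    _ ≤ ‖S.adjoint v‖ * ‖k‖ := abs_real_inner_le_norm _ _
    _ = ‖k‖ * √Var[L; ν] := by rw [h_std, mul_comm]

end IsCenteredGaussian

theorem stmt_1_general {Ω F H : Type*} [MeasurableSpace Ω] [NormedAddCommGroup F]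
    [InnerProductSpace ℝ F] [CompleteSpace F] [NormedAddCommGroup H] [InnerProductSpace ℝ H]
    [CompleteSpace H] [SecondCountableTopology H] [MeasurableSpace H] [BorelSpace H]
    {S : F →L[ℝ] H} {ν : Measure H} (hν : IsCenteredGaussian ν (S ∘L S.adjoint))
    {μ : Measure Ω} [SFinite μ] [NeZero μ] {A : Ω → H} (hA : Measurable A)
    (hAS : ∀ᵐ x ∂μ, A x ∈ Set.range S) : ν ∗ μ.map A ≪ ν ∧ ν ≪ ν ∗ μ.map A := by
  have : IsGaussian ν := hν.isGaussian
  have : NeZero (μ.map A) := ⟨(Measure.map_ne_zero_iff hA.aemeasurable).2 (NeZero.ne μ)⟩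
  have h_ae : ∀ᵐ h ∂(μ.map A), IsCameronMartinVector ν h := by
    rw [ae_map_iff hA.aemeasurable (measurableSet_setOf_isCameronMartinVector ν)]
    exact hAS.mono fun x ⟨k, hk⟩ ↦ hk ▸ hν.isCameronMartinVector_apply k
  exact ⟨conv_absolutelyContinuous_of_ae_isCameronMartinVector h_ae,
    absolutelyContinuous_conv_of_frequently_ae_isCameronMartinVector h_ae.frequently⟩

/-- **Corollary.** If `ν = N(0,C)` and `A : H → H` is a linear operator with
`A(H) ⊆ C^{1/2}(H)`, then `ν * (μ ∘ A⁻¹) ∼ ν`. -/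
theorem stmt_1 {H : Type*} [NormedAddCommGroup H] [InnerProductSpace ℝ H]
    [CompleteSpace H] [TopologicalSpace.SeparableSpace H]
    [MeasurableSpace H] [BorelSpace H]
    (C sqrtC : H →L[ℝ] H)
    (hsa : ∀ x y : H, ⟪C x, y⟫_ℝ = ⟪x, C y⟫_ℝ)
    (hpos : ∀ x : H, x ≠ 0 → 0 < ⟪C x, x⟫_ℝ)
    (htc : IsTraceClass C)
    (hsqrt_sa : ∀ x y : H, ⟪sqrtC x, y⟫_ℝ = ⟪x, sqrtC y⟫_ℝ)
    (hsqrt_nonneg : ∀ x : H, 0 ≤ ⟪sqrtC x, x⟫_ℝ)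
    (hsqrt : sqrtC ∘L sqrtC = C)
    (A : H →L[ℝ] H) (hA : Set.range A ⊆ Set.range sqrtC)
    (ν μ : Measure H) [IsProbabilityMeasure μ]
    (hν : IsCenteredGaussian ν C) :
    (ν ∗ (μ.map A)) ≪ ν ∧ ν ≪ (ν ∗ (μ.map A)) := by
  have : SecondCountableTopology H := UniformSpace.secondCountable_of_separable H
  have h_adjoint : sqrtC = sqrtC.adjoint :=
    (ContinuousLinearMap.eq_adjoint_iff sqrtC sqrtC).2 hsqrt_sa
  have h_cov : sqrtC ∘L sqrtC.adjoint = C := by rw [← h_adjoint, hsqrt]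
  exact stmt_1_general (h_cov ▸ hν) A.continuous.measurable
    (ae_of_all μ fun x ↦ hA (Set.mem_range_self x))
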